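/- Let Q be a nonempty finite set, μ a probability distribution on Q, and C, n positive integers. For each q ∈ Q^C let Y_q be an n×n complex matrix with 0 ≤ Y_q ≤ I in the Loewner order. Let Y := E_{q∼μ^C}[Y_q], and for i ∈ {1,…,C} and q_i ∈ Q let Y_{i,q_i} be the expectation of Y_q over q ∼ μ^C conditioned on coordinate i equaling q_i. Then E_{(i,q_i)}[(Y − Y_{i,q_i})²] ≤ (1/C) · E_{q∼μ^C}[Y_q²] in the Loewner order, where E_{(i,q_i)} denotes expectation over i uniform in {1,…,C} and q_i ∼ μ. -/

import Mathlib

open Matrix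

open scoped ComplexOrder

open scoped MatrixOrder

/-! View functions on a finite product space as vectors for the inner product
`⟨F, G⟩ = E[star F * G]` with values in a star-ordered ring. The effects `E[F | q_i = a] - E[F]`,
evaluated at `a = q_i` and summed over `i`, form the orthogonal projection of `F` onto sums of
centred functions of a single coordinate (the Hájek projection of `F - E[F]`). Pythagoras then
bounds the second moment of the projection, which is the sum of the second moments of the effects
because distinct coordinates are independent, by the second moment of `F`. -/

section ProductMean

variable {ι : Type*} [Fintype ι] [DecidableEq ι] {Q : ι → Type*}

lemma mul_prod_update {R : Type*} [CommMonoid R] (w : ∀ i, Q i → R) (q : ∀ i, Q i)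
    (i : ι) (a : Q i) :
    w i (q i) * ∏ j, w j (Function.update q i a j) = w i a * ∏ j, w j (q j) := by
  have prod_off : ∏ j ∈ {i}ᶜ, w j (Function.update q i a j) = ∏ j ∈ {i}ᶜ, w j (q j) :=
    Finset.prod_congr rfl fun j hj => by rw [Function.update_of_ne (by simpa using hj)]
  rw [Fintype.prod_eq_mul_prod_compl i, Fintype.prod_eq_mul_prod_compl i, prod_off,
    Function.update_self, mul_left_comm]

variable [∀ i, Fintype (Q i)]

section Mean

variable {R A : Type*} [CommSemiring R]

/-- The expectation of `F` under the product over `i` of the distributions with weights `w i`. -/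
def productMean [AddCommMonoid A] [Module R A] (w : ∀ i, Q i → R) (F : (∀ i, Q i) → A) : A :=
  ∑ q : ∀ i, Q i, (∏ i, w i (q i)) • F q

/-- The expectation of `F` conditioned on the event that coordinate `i` equals `a`. By independence
of the coordinates it is the expectation of `F` with coordinate `i` overwritten by `a`, which also
makes sense when the event has probability zero. -/
def condMean [AddCommMonoid A] [Module R A] (w : ∀ i, Q i → R) (F : (∀ i, Q i) → A)
    (i : ι) (a : Q i) : A :=
  productMean w fun q => F (Function.update q i a)

section AddCommMonoid

variable [AddCommMonoid A] [Module R A] (w : ∀ i, Q i → R)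

lemma productMean_add (F G : (∀ i, Q i) → A) :
    productMean w (fun q => F q + G q) = productMean w F + productMean w G := by
  simp only [productMean, smul_add, Finset.sum_add_distrib]

lemma productMean_sum {κ : Type*} (s : Finset κ) (F : κ → (∀ i, Q i) → A) :
    productMean w (fun q => ∑ k ∈ s, F k q) = ∑ k ∈ s, productMean w (F k) := by
  simp only [productMean, Finset.smul_sum]
  exact Finset.sum_comm

variable {w}

lemma productMean_const (hw : ∀ i, ∑ a, w i a = 1) (x : A) :
    productMean w (fun _ => x) = x := by
  rw [productMean, ← Finset.sum_smul, ← Fintype.prod_sum, Fintype.prod_congr _ _ hw,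
    Finset.prod_const_one, one_smul]

-- Exchanging `a` with `q i` is an involution of the pairs `(a, q)` that preserves their weights.
lemma sum_smul_condMean {i : ι} (hw : ∑ a, w i a = 1) (F : (∀ i, Q i) → A) :
    ∑ a, w i a • condMean w F i a = productMean w F := by
  have swap_involutive : Function.Involutive
      fun x : Q i × (∀ j, Q j) => (x.2 i, Function.update x.2 i x.1) := fun x => by simp
  calc ∑ a, w i a • condMean w F i a
      = ∑ x : Q i × (∀ j, Q j),
          (w i x.1 * ∏ j, w j (x.2 j)) • F (Function.update x.2 i x.1) := by
        simp only [condMean, productMean, Finset.smul_sum, smul_smul, Fintype.sum_prod_type]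
    _ = ∑ x : Q i × (∀ j, Q j), (w i x.1 * ∏ j, w j (x.2 j)) • F x.2 :=
        Fintype.sum_equiv swap_involutive.toPerm _ _ fun x => by
          simp only [Function.Involutive.coe_toPerm, mul_prod_update]
    _ = productMean w F := by
        simp only [Fintype.sum_prod_type, mul_smul, ← Finset.smul_sum]
        rw [← Finset.sum_smul, hw, one_smul, productMean]

lemma productMean_eval (hw : ∀ i, ∑ a, w i a = 1) {i : ι} (H : Q i → A) :
    productMean w (fun q => H (q i)) = ∑ a, w i a • H a := by
  rw [← sum_smul_condMean (hw i)]
  simp only [condMean, Function.update_self, productMean_const hw]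

end AddCommMonoid

lemma productMean_eval_mul [NonUnitalNonAssocSemiring A] [Module R A] [SMulCommClass R A A]
    {w : ∀ i, Q i → R} {i : ι} (hw : ∑ a, w i a = 1) (H : Q i → A) (F : (∀ i, Q i) → A) :
    productMean w (fun q => H (q i) * F q) = ∑ a, w i a • (H a * condMean w F i a) := by
  rw [← sum_smul_condMean hw]
  simp only [condMean, Function.update_self, productMean, Finset.mul_sum, mul_smul_comm]

lemma star_productMean [StarRing R] [AddCommMonoid A] [StarAddMonoid A] [Module R A]
    [StarModule R A] {w : ∀ i, Q i → R} (hw : ∀ i a, IsSelfAdjoint (w i a))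
    (F : (∀ i, Q i) → A) : star (productMean w F) = productMean w fun q => star (F q) := by
  simp only [productMean, star_sum, star_smul, star_prod, (hw _ _).star_eq]

lemma productMean_nonneg [PartialOrder R] [IsOrderedRing R] [AddCommMonoid A] [PartialOrder A]
    [IsOrderedAddMonoid A] [Module R A] [PosSMulMono R A] {w : ∀ i, Q i → R}
    (hw : ∀ i a, 0 ≤ w i a) {F : (∀ i, Q i) → A} (hF : ∀ q, 0 ≤ F q) : 0 ≤ productMean w F :=
  Finset.sum_nonneg fun q _ => smul_nonneg (Finset.prod_nonneg fun i _ => hw i (q i)) (hF q)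

end Mean

section Effect

variable {R A : Type*} [CommSemiring R]

/-- The effect of the value `a` of coordinate `i` on the expectation of `F` (the first-order term of
the Hoeffding decomposition). -/
def effect [AddCommGroup A] [Module R A] (w : ∀ i, Q i → R) (F : (∀ i, Q i) → A)
    (i : ι) (a : Q i) : A :=
  condMean w F i a - productMean w F

/-- The Hájek projection of `F - E[F]`: the best approximation of `F - E[F]` by sums of functions
of a single coordinate. -/
def hajekSum [AddCommGroup A] [Module R A] (w : ∀ i, Q i → R) (F : (∀ i, Q i) → A)
    (q : ∀ i, Q i) : A :=
  ∑ i, effect w F i (q i)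

section AddCommGroup

variable [AddCommGroup A] [Module R A] {w : ∀ i, Q i → R}

lemma productMean_sub (w : ∀ i, Q i → R) (F G : (∀ i, Q i) → A) :
    productMean w (fun q => F q - G q) = productMean w F - productMean w G := by
  simp only [productMean, smul_sub, Finset.sum_sub_distrib]

lemma sum_smul_effect {i : ι} (hw : ∑ a, w i a = 1) (F : (∀ i, Q i) → A) :
    ∑ a, w i a • effect w F i a = 0 := by
  simp only [effect, smul_sub, Finset.sum_sub_distrib]
  rw [sum_smul_condMean hw, ← Finset.sum_smul, hw, one_smul, sub_self]

lemma condMean_hajekSum (hw : ∀ i, ∑ a, w i a = 1) (F : (∀ i, Q i) → A) (i : ι) (a : Q i) :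
    condMean w (hajekSum w F) i a = effect w F i a := by
  have other_coordinate (j : ι) (hj : j ≠ i) :
      productMean w (fun q => effect w F j (Function.update q i a j)) = 0 := by
    simp only [Function.update_of_ne hj, productMean_eval hw, sum_smul_effect (hw j)]
  simp only [condMean, hajekSum]
  rw [productMean_sum, Fintype.sum_eq_single i other_coordinate]
  simp only [Function.update_self, productMean_const hw]

lemma condMean_sub_hajekSum (hw : ∀ i, ∑ a, w i a = 1) (F : (∀ i, Q i) → A) (i : ι) (a : Q i) :
    condMean w (fun q => F q - hajekSum w F q) i a = productMean w F := by
  calc condMean w (fun q => F q - hajekSum w F q) i a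
      = condMean w F i a - condMean w (hajekSum w F) i a := productMean_sub w _ _
    _ = productMean w F := by rw [condMean_hajekSum hw, effect, sub_sub_cancel]

end AddCommGroup

section Orthogonality

variable [NonUnitalRing A] [StarRing A] [Module R A] [SMulCommClass R A A] {w : ∀ i, Q i → R}

lemma productMean_star_hajekSum_mul (hw : ∀ i, ∑ a, w i a = 1) (F G : (∀ i, Q i) → A) :
    productMean w (fun q => star (hajekSum w F q) * G q)
      = ∑ i, ∑ a, w i a • (star (effect w F i a) * condMean w G i a) := by
  simp only [hajekSum, star_sum, Finset.sum_mul, productMean_sum]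
  exact Fintype.sum_congr _ _ fun i => productMean_eval_mul (hw i) (star <| effect w F i ·) G

lemma productMean_star_hajekSum_mul_self (hw : ∀ i, ∑ a, w i a = 1) (F : (∀ i, Q i) → A) :
    productMean w (fun q => star (hajekSum w F q) * hajekSum w F q)
      = ∑ i, ∑ a, w i a • (star (effect w F i a) * effect w F i a) := by
  simp only [productMean_star_hajekSum_mul hw, condMean_hajekSum hw]

variable [StarRing R] [StarModule R A]

lemma productMean_star_hajekSum_mul_sub [IsScalarTower R A A]
    (hsa : ∀ i a, IsSelfAdjoint (w i a)) (hw : ∀ i, ∑ a, w i a = 1) (F : (∀ i, Q i) → A) :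
    productMean w (fun q => star (hajekSum w F q) * (F q - hajekSum w F q)) = 0 := by
  have effect_centred (i : ι) : ∑ a, w i a • star (effect w F i a) = 0 := by
    simpa only [star_sum, star_smul, (hsa _ _).star_eq, star_zero] using
      congrArg star (sum_smul_effect (hw i) F)
  simp only [productMean_star_hajekSum_mul hw, condMean_sub_hajekSum hw, ← smul_mul_assoc,
    ← Finset.sum_mul, effect_centred, zero_mul, Finset.sum_const_zero]

lemma productMean_star_mul_self_eq_add [IsScalarTower R A A]
    (hsa : ∀ i a, IsSelfAdjoint (w i a)) (hw : ∀ i, ∑ a, w i a = 1) (F : (∀ i, Q i) → A) :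
    productMean w (fun q => star (F q) * F q)
      = productMean w (fun q => star (hajekSum w F q) * hajekSum w F q)
        + productMean w (fun q => star (F q - hajekSum w F q) * (F q - hajekSum w F q)) := by
  have orthogonal := productMean_star_hajekSum_mul_sub hsa hw F
  have orthogonal_symm :
      productMean w (fun q => star (F q - hajekSum w F q) * hajekSum w F q) = 0 := by
    simpa only [star_productMean hsa, star_mul, star_star, star_zero] using
      congrArg star orthogonal
  have expand (p r : A) :
      star (p + r) * (p + r) = (star p * p + star r * r) + (star p * r + star r * p) := by
    rw [star_add]
    noncomm_ring
  calc productMean w (fun q => star (F q) * F q)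
      = productMean w (fun q =>
          (star (hajekSum w F q) * hajekSum w F q
            + star (F q - hajekSum w F q) * (F q - hajekSum w F q))
          + (star (hajekSum w F q) * (F q - hajekSum w F q)
            + star (F q - hajekSum w F q) * hajekSum w F q)) := by
        simp only [← expand, add_sub_cancel]
    _ = _ := by simp only [productMean_add, orthogonal, orthogonal_symm, add_zero]

end Orthogonality

end Effect

section Order

variable {R A : Type*} [CommSemiring R] [PartialOrder R] [StarRing R] [StarOrderedRing R]
  [NonUnitalRing A] [PartialOrder A] [StarRing A] [StarOrderedRing A] [Module R A]
  [StarModule R A] [IsScalarTower R A A] [SMulCommClass R A A] {w : ∀ i, Q i → R}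

theorem claimA4_general (hw : ∀ i a, 0 ≤ w i a) (hw1 : ∀ i, ∑ a, w i a = 1) (F : (∀ i, Q i) → A) :
    ∑ i, ∑ a, w i a • (star (productMean w F - condMean w F i a)
        * (productMean w F - condMean w F i a))
      ≤ productMean w fun q => star (F q) * F q := by
  calc _ = ∑ i, ∑ a, w i a • (star (effect w F i a) * effect w F i a) := by
        simp only [← neg_sub (condMean w F _ _), star_neg, neg_mul_neg, effect]
    _ = productMean w (fun q => star (hajekSum w F q) * hajekSum w F q) :=
        (productMean_star_hajekSum_mul_self hw1 F).symm
    _ ≤ productMean w (fun q => star (hajekSum w F q) * hajekSum w F q)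
          + productMean w (fun q => star (F q - hajekSum w F q) * (F q - hajekSum w F q)) :=
        le_add_of_nonneg_right (productMean_nonneg hw fun q => star_mul_self_nonneg _)
    _ = productMean w (fun q => star (F q) * F q) :=
        (productMean_star_mul_self_eq_add (fun i a => .of_nonneg (hw i a)) hw1 F).symm

lemma sum_smul_sub_condMean_mul_self_le (hw : ∀ i a, 0 ≤ w i a) (hw1 : ∀ i, ∑ a, w i a = 1)
    {F : (∀ i, Q i) → A} (hF : ∀ q, IsSelfAdjoint (F q)) :
    ∑ i, ∑ a, w i a • ((productMean w F - condMean w F i a)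
        * (productMean w F - condMean w F i a))
      ≤ productMean w fun q => F q * F q := by
  have hsa (i a) : IsSelfAdjoint (w i a) := .of_nonneg (hw i a)
  simpa only [star_sub, condMean, star_productMean hsa, (hF _).star_eq] using
    claimA4_general hw hw1 F

end Order

end ProductMean

/-- Claim A.4: for matrices `0 ≤ Y_q ≤ I`, with `Y` the mean over `μ^C` and `Y_{i,q_i}`
the mean conditioned on coordinate `i` equaling `q_i`,
`E_{(i,q_i)}[(Y − Y_{i,q_i})²] ≤ (1/C)·E_q[Y_q²]` in the Loewner order. -/
theorem claimA4 {Q : Type*} [Fintype Q] [Nonempty Q] [DecidableEq Q]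
    (w : Q → ℝ) (hw : ∀ q, 0 ≤ w q) (hw1 : ∑ q, w q = 1)
    (C n : ℕ) (hC : 0 < C) (hn : 0 < n)
    (Y : (Fin C → Q) → Matrix (Fin n) (Fin n) ℂ)
    (hY0 : ∀ q, (Y q).PosSemidef) (hY1 : ∀ q, (1 - Y q).PosSemidef) :
    let Yb := ∑ q : Fin C → Q, (∏ i, w (q i)) • Y q
    let Yi := fun (i : Fin C) (qi : Q) =>
      ∑ q : Fin C → Q, (∏ j, w (q j)) • Y (Function.update q i qi)
    ((C : ℝ)⁻¹ • (∑ q : Fin C → Q, (∏ i, w (q i)) • (Y q * Y q))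
      - (C : ℝ)⁻¹ • ∑ i : Fin C, ∑ qi : Q,
          w qi • ((Yb - Yi i qi) * (Yb - Yi i qi))).PosSemidef := by
  intro Yb Yi
  rw [← smul_sub]
  exact .smul (Matrix.le_iff.1 <| sum_smul_sub_condMean_mul_self_le (fun _ => hw) (fun _ => hw1)
    fun q => (hY0 q).isHermitian) (inv_nonneg.2 C.cast_nonneg)
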